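/- Let n ≥ 2 and D_G(x‖y) = ∑_{i=1}^n ( ln(y_i/x_i) + x_i/y_i − 1 ) be the Itakura–Saito divergence on ℝ₊ⁿ. If r² ≤ ln 2 − ½ then the ball { y ∈ ℝ₊ⁿ : D_G(x‖y) ≤ r² } is convex for every x, and if r² > 2 ln 2 − 1 then this ball is nonconvex for every x. -/

import Mathlib

/-- The one-variable Itakura–Saito function. -/
noncomputable def isf (t : ℝ) : ℝ := Real.log t + t⁻¹ - 1

lemma isf_hasDerivAt {t : ℝ} (ht : 0 < t) : HasDerivAt isf (t⁻¹ - t⁻¹ ^ 2) t := by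
  have h := ((Real.hasDerivAt_log ht.ne').add (hasDerivAt_inv ht.ne')).sub_const 1
  have e : t⁻¹ - t⁻¹ ^ 2 = t⁻¹ + -(t ^ 2)⁻¹ := by rw [inv_pow]; ring
  rw [e]
  exact h

lemma isf_nonneg {t : ℝ} (ht : 0 < t) : 0 ≤ isf t := by
  have := Real.one_sub_inv_le_log_of_pos ht
  unfold isf; linarith

lemma isf_two_lt {t : ℝ} (ht : 2 < t) : isf 2 < isf t := by
  have h0 : 0 < t := by linarith
  have h := Real.one_sub_inv_le_log_of_pos (show 0 < t / 2 by positivity)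
  rw [Real.log_div h0.ne' (by norm_num), inv_div] at h
  have h2 : t⁻¹ < 2⁻¹ := inv_strictAnti₀ (by norm_num) ht
  unfold isf
  have : 2 / t = 2 * t⁻¹ := by ring
  linarith

lemma isf_contOn {s : Set ℝ} (hs : ∀ t ∈ s, 0 < t) : ContinuousOn isf s :=
  fun t ht => (isf_hasDerivAt (hs t ht)).continuousAt.continuousWithinAt

lemma isf_convexOn : ConvexOn ℝ (Set.Ioc 0 2) isf := by
  apply MonotoneOn.convexOn_of_deriv (convex_Ioc 0 2) (isf_contOn fun t ht => ht.1)
  · intro t ht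
    rw [interior_Ioc] at ht
    exact (isf_hasDerivAt ht.1).differentiableAt.differentiableWithinAt
  · rw [interior_Ioc]
    intro a ha b hb hab
    rw [(isf_hasDerivAt ha.1).deriv, (isf_hasDerivAt hb.1).deriv]
    have h1 : b⁻¹ ≤ a⁻¹ := inv_anti₀ ha.1 hab
    have h2 : (2 : ℝ)⁻¹ < b⁻¹ := inv_strictAnti₀ hb.1 hb.2
    norm_num at h2
    nlinarith

lemma isf_strictConcaveOn : StrictConcaveOn ℝ (Set.Ici 2) isf := by
  apply StrictAntiOn.strictConcaveOn_of_deriv (convex_Ici 2)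
    (isf_contOn fun t ht => lt_of_lt_of_le two_pos ht)
  rw [interior_Ici]
  intro a ha b hb hab
  simp only [Set.mem_Ioi] at ha hb
  have ha0 : 0 < a := by linarith
  have hb0 : 0 < b := by linarith
  rw [(isf_hasDerivAt ha0).deriv, (isf_hasDerivAt hb0).deriv]
  have h1 : b⁻¹ < a⁻¹ := inv_strictAnti₀ ha0 hab
  have h2 : a⁻¹ < (2 : ℝ)⁻¹ := inv_strictAnti₀ two_pos ha
  norm_num at h2
  nlinarith

lemma isf_exists {c : ℝ} (hc : isf 2 < c) : ∃ b, 2 < b ∧ isf b = c := by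
  have h0 : 0 ≤ isf 2 := isf_nonneg two_pos
  have hM : 2 ≤ Real.exp (c + 1) := by
    have := Real.add_one_le_exp (c + 1); linarith
  have hv : c ≤ isf (Real.exp (c + 1)) := by
    have : 0 < (Real.exp (c + 1))⁻¹ := by positivity
    unfold isf; rw [Real.log_exp]; linarith
  obtain ⟨b, hb, hbc⟩ := intermediate_value_Icc hM
    (isf_contOn fun t ht => lt_of_lt_of_le two_pos ht.1) ⟨hc.le, hv⟩
  refine ⟨b, lt_of_le_of_ne hb.1 ?_, hbc⟩
  rintro rfl
  exact hc.ne hbc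

lemma isf_sum {n : ℕ} (x y : Fin n → ℝ) :
    ∑ i, (Real.log (y i / x i) + x i / y i - 1) = ∑ i, isf (y i / x i) := by
  simp [isf, inv_div]

lemma isf_sum_two {n : ℕ} {i j : Fin n} (hij : i ≠ j) (x : Fin n → ℝ) (hx : ∀ i, 0 < x i)
    (a b : ℝ) :
    ∑ k, isf (x k * (if k = i then a else if k = j then b else 1) / x k) = isf a + isf b := by
  have : ∀ k, isf (x k * (if k = i then a else if k = j then b else 1) / x k)
      = (if k = i then isf a else 0) + (if k = j then isf b else 0) := by
    intro k
    rw [mul_div_cancel_left₀ _ (hx k).ne']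
    by_cases h1 : k = i
    · have : k ≠ j := fun h => hij (h1 ▸ h)
      simp [h1, hij]
    · by_cases h2 : k = j
      · simp [h2, hij.symm]
      · simp [h1, h2, isf]
  rw [Finset.sum_congr rfl fun k _ => this k]
  simp [Finset.sum_add_distrib]

/-- In dimension `n ≥ 2`, Itakura–Saito balls are convex for
`r² ≤ ln 2 − ½` and nonconvex for `r² > 2 ln 2 − 1`. -/
theorem itakuraSaito_ball_convexity (n : ℕ) (hn : 2 ≤ n) (r2 : ℝ) :
    (r2 ≤ Real.log 2 - 1 / 2 →
      ∀ x : Fin n → ℝ, (∀ i, 0 < x i) →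
        Convex ℝ {y : Fin n → ℝ | (∀ i, 0 < y i) ∧
          ∑ i, (Real.log (y i / x i) + x i / y i - 1) ≤ r2}) ∧
    (2 * Real.log 2 - 1 < r2 →
      ∀ x : Fin n → ℝ, (∀ i, 0 < x i) →
        ¬ Convex ℝ {y : Fin n → ℝ | (∀ i, 0 < y i) ∧
          ∑ i, (Real.log (y i / x i) + x i / y i - 1) ≤ r2}) := by
  simp only [isf_sum]
  have hf2 : isf 2 = Real.log 2 - 1 / 2 := by unfold isf; ring
  constructor
  · intro hr x hx
    have key : ∀ y : Fin n → ℝ, (∀ i, 0 < y i) → ∑ i, isf (y i / x i) ≤ r2 →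
        ∀ i, y i / x i ∈ Set.Ioc (0 : ℝ) 2 := by
      intro y hy hs i
      refine ⟨div_pos (hy i) (hx i), ?_⟩
      by_contra! hc
      have h1 := isf_two_lt hc
      have h2 := Finset.single_le_sum (f := fun i => isf (y i / x i))
        (fun k _ => isf_nonneg (div_pos (hy k) (hx k))) (Finset.mem_univ i)
      linarith
    rintro y ⟨hy, hys⟩ z ⟨hz, hzs⟩ a b ha hb hab
    refine ⟨fun i => (convex_Ioi (0 : ℝ)) (hy i) (hz i) ha hb hab, ?_⟩
    calc ∑ i, isf ((a • y + b • z) i / x i)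
        ≤ ∑ i, (a * isf (y i / x i) + b * isf (z i / x i)) := by
          apply Finset.sum_le_sum
          intro i _
          have h := isf_convexOn.2 (key y hy hys i) (key z hz hzs i) ha hb hab
          simp only [smul_eq_mul] at h
          convert h using 2
          simp only [Pi.add_apply, Pi.smul_apply, smul_eq_mul]
          ring
      _ = a * ∑ i, isf (y i / x i) + b * ∑ i, isf (z i / x i) := by
          rw [Finset.sum_add_distrib, Finset.mul_sum, Finset.mul_sum]
      _ ≤ a * r2 + b * r2 := by gcongr
      _ = r2 := by rw [← add_mul, hab, one_mul]
  · intro hr x hx hconv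
    obtain ⟨b, hb, hbc⟩ := isf_exists (c := r2 - isf 2) (by linarith)
    let i : Fin n := ⟨0, by omega⟩
    let j : Fin n := ⟨1, by omega⟩
    have hij : i ≠ j := by simp [i, j]
    let w : ℝ → ℝ → Fin n → ℝ :=
      fun p q k => x k * (if k = i then p else if k = j then q else 1)
    have hw : ∀ p q, 0 < p → 0 < q → ∀ k, 0 < w p q k := by
      intro p q hp hq k
      apply mul_pos (hx k)
      split_ifs <;> first | assumption | exact one_pos
    have h1 := hconv (x := w 2 b) ⟨hw _ _ two_pos (by linarith), by
        rw [isf_sum_two hij x hx]; linarith⟩ (y := w b 2) ⟨hw _ _ (by linarith) two_pos, by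
        rw [isf_sum_two hij x hx]; linarith⟩ (a := 1 / 2) (b := 1 / 2)
        (by norm_num) (by norm_num) (by norm_num)
    have hm : ((1 / 2 : ℝ) • w 2 b + (1 / 2 : ℝ) • w b 2)
        = w (1 / 2 * 2 + 1 / 2 * b) (1 / 2 * 2 + 1 / 2 * b) := by
      ext k
      simp only [w, Pi.add_apply, Pi.smul_apply, smul_eq_mul]
      split_ifs <;> ring
    rw [hm] at h1
    have h2 := h1.2
    rw [isf_sum_two hij x hx] at h2
    have h3 := isf_strictConcaveOn.2 (Set.mem_Ici.2 le_rfl) (Set.mem_Ici.2 hb.le) hb.ne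
      (show (0 : ℝ) < 1 / 2 by norm_num) (show (0 : ℝ) < 1 / 2 by norm_num) (by norm_num)
    simp only [smul_eq_mul] at h3
    linarith
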